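/- arXiv:1003.5028 — 4 statements merged into one kernel-verified Lean document; each statement's English description precedes it below -/
import Mathlib

section
/- Let 𝔽_q be a finite field with q elements, let A be an invertible k×k matrix over 𝔽_q whose characteristic polynomial is squarefree (every irreducible factor has multiplicity 1), let α_1, …, α_N be the degrees of the distinct irreducible factors of the characteristic polynomial of A over 𝔽_q, and let Q be the least common multiple of q^{α_1} − 1, …, q^{α_N} − 1. Then A^Q = I; equivalently, every solution of the linear system v_{n+1} = A v_n over 𝔽_q is Q-periodic, i.e. v_{n+Q} = v_n for all n. -/
open Polynomial UniqueFactorizationMonoid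

/-!
An irreducible `g` of degree `α` over `𝔽_q` divides `X ^ (q ^ α) - X = X * (X ^ (q ^ α - 1) - 1)`,
hence also `X * (X ^ Q - 1)` as soon as `q ^ α - 1 ∣ Q`. If this holds for all irreducible factors
of a squarefree polynomial `p`, then `p` itself divides `X * (X ^ Q - 1)`. Thus every root `a` of
`p` in an `𝔽_q`-algebra satisfies `a * (a ^ Q - 1) = 0`, and if `a` is a unit, then `a ^ Q = 1`.
By Cayley–Hamilton, an invertible matrix is such a root of its characteristic polynomial.
-/

theorem dvd_of_squarefree_of_forall_irreducible_dvd {R : Type*} [CommMonoidWithZero R]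
    [UniqueFactorizationMonoid R] {x y : R} (hx : Squarefree x)
    (h : ∀ g, Irreducible g → g ∣ x → g ∣ y) : x ∣ y := by
  induction x using WfDvdMonoid.induction_on_irreducible with
  | zero => exact (hx 0 (mul_zero 0).dvd).dvd
  | unit u hu => exact hu.dvd
  | mul x g _ hg ih =>
    obtain ⟨hgx, -, hx'⟩ := squarefree_mul_iff.mp hx
    exact hgx.mul_dvd (h g hg (dvd_mul_right g x))
      (ih hx' fun g' hg' hg'x => h g' hg' (hg'x.mul_left g))

theorem natDegree_mem_image_normalizedFactors {F : Type*} [Field F] [DecidableEq F] {p g : F[X]}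
    (hp : p ≠ 0) (hg : Irreducible g) (hgp : g ∣ p) :
    g.natDegree ∈ (normalizedFactors p).toFinset.image natDegree := by
  obtain ⟨g', hg', hgg'⟩ := exists_mem_normalizedFactors_of_dvd hp hg hgp
  exact Finset.mem_image.mpr ⟨g', Multiset.mem_toFinset.mpr hg',
    (natDegree_eq_of_degree_eq (degree_eq_degree_of_associated hgg')).symm⟩

theorem irreducible_dvd_X_mul_X_pow_sub_one {F : Type*} [Field F] [Finite F] {g : F[X]}
    (hg : Irreducible g) {n : ℕ} (hn : Nat.card F ^ g.natDegree - 1 ∣ n) :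
    g ∣ X * (X ^ n - 1) := by
  have hpos : Nat.card F ^ g.natDegree ≠ 0 := pow_ne_zero _ Nat.card_pos.ne'
  calc g ∣ X ^ Nat.card F ^ g.natDegree - X :=
        hg.natDegree_dvd_iff_dvd_X_pow_card_pow_sub_X.mp dvd_rfl
    _ = X * (X ^ (Nat.card F ^ g.natDegree - 1) - 1) := by
        rw [mul_sub, mul_one, mul_pow_sub_one hpos]
    _ ∣ X * (X ^ n - 1) := mul_dvd_mul_left X (dvd_pow_sub_one_of_dvd hn)

theorem mul_pow_sub_one_eq_zero_of_aeval_eq_zero {F R : Type*} [Field F] [Finite F] [Ring R]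
    [Algebra F R] {a : R} {p : F[X]} (hp : Squarefree p) (hpa : aeval a p = 0) {n : ℕ}
    (hn : ∀ g, Irreducible g → g ∣ p → Nat.card F ^ g.natDegree - 1 ∣ n) :
    a * (a ^ n - 1) = 0 := by
  have hdvd : p ∣ X * (X ^ n - 1) := dvd_of_squarefree_of_forall_irreducible_dvd hp
    fun g hg hgp => irreducible_dvd_X_mul_X_pow_sub_one hg (hn g hg hgp)
  simpa using aeval_eq_zero_of_dvd_aeval_eq_zero hdvd hpa

theorem apply_add_eq_pow_smul {R M : Type*} [Monoid R] [MulAction R M] {a : R} {v : ℕ → M}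
    (hv : ∀ n, v (n + 1) = a • v n) (n m : ℕ) : v (n + m) = a ^ m • v n := by
  induction m with
  | zero => rw [add_zero, pow_zero, one_smul]
  | succ m ih => rw [← add_assoc, hv, ih, smul_smul, pow_succ']

theorem stmt3_general {F R M : Type*} [Field F] [Finite F] [Ring R] [Algebra F R] [MulAction R M]
    {a : R} (ha : IsUnit a) {p : F[X]} (hp : Squarefree p) (hpa : aeval a p = 0) {Q : ℕ}
    (hQ : ∀ g, Irreducible g → g ∣ p → Nat.card F ^ g.natDegree - 1 ∣ Q) :
    a ^ Q = 1 ∧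
      ∀ v : ℕ → M, (∀ n, v (n + 1) = a • v n) → ∀ n, v (n + Q) = v n := by
  have hpow : a ^ Q = 1 :=
    sub_eq_zero.mp (ha.mul_right_eq_zero.mp (mul_pow_sub_one_eq_zero_of_aeval_eq_zero hp hpa hQ))
  refine ⟨hpow, fun v hv n => ?_⟩
  rw [apply_add_eq_pow_smul hv, hpow, one_smul]

/-- Let `F = 𝔽_q` be a finite field with `q` elements, `A` an invertible `k × k`
matrix over `F` whose characteristic polynomial is squarefree, and let `Q` be the least common
multiple of the numbers `q ^ α - 1` as `α` ranges over the degrees of the distinct irreducible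
factors of the characteristic polynomial of `A`.  Then `A ^ Q = 1`; equivalently, every solution of
`v_{n+1} = A v_n` over `F` is `Q`-periodic. -/
theorem stmt3 (F : Type*) [Field F] [Fintype F] (k : ℕ) [DecidableEq F]
    (A : Matrix (Fin k) (Fin k) F) (hA : IsUnit A)
    (hsq : Squarefree (Matrix.charpoly A))
    (Q : ℕ)
    (hQ : Q = ((normalizedFactors (Matrix.charpoly A)).toFinset.image
        Polynomial.natDegree).lcm (fun α => Fintype.card F ^ α - 1)) :
    A ^ Q = 1 ∧
      ∀ v : ℕ → (Fin k → F), (∀ n, v (n + 1) = A.mulVec (v n)) →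
        ∀ n, v (n + Q) = v n := by
  refine stmt3_general hA hsq A.aeval_self_charpoly fun g hg hgp => ?_
  rw [hQ, Nat.card_eq_fintype_card]
  exact Finset.dvd_lcm (natDegree_mem_image_normalizedFactors hsq.ne_zero hg hgp)
end

section
/- Let 𝔽_q be a finite field with q elements of characteristic p, let A be an invertible k×k matrix over 𝔽_q, let α_1, …, α_N be the degrees of the distinct irreducible factors of the characteristic polynomial of A over 𝔽_q, and let Q be the least common multiple of q^{α_1} − 1, …, q^{α_N} − 1. Assume the multiplicity of every irreducible factor of the characteristic polynomial of A is at most p. Then A^{Qp} = I; equivalently, every solution of the linear system v_{n+1} = A v_n over 𝔽_q is Qp-periodic. -/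
open Polynomial UniqueFactorizationMonoid

/-!
An irreducible polynomial `f` of degree `d` over `𝔽_q` divides `X ^ q ^ d - X`, hence also
`X ^ (Q + 1) - X` as soon as `q ^ d - 1 ∣ Q`. So if every irreducible factor of `g` satisfies this
and has multiplicity at most `p ^ m`, then `g ∣ (X ^ (Q + 1) - X) ^ p ^ m`, which by Frobenius is
`X ^ ((Q + 1) * p ^ m) - X ^ p ^ m`. Evaluating at a root `a` of `g` in an `𝔽_q`-algebra gives
`a ^ ((Q + 1) * p ^ m) = a ^ p ^ m`, and a unit `a` can be cancelled. By Cayley–Hamilton this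
applies to an invertible matrix and its characteristic polynomial, with `m = 1`.
-/

theorem dvd_pow_of_count_normalizedFactors_le {M : Type*} [CommMonoidWithZero M]
    [NormalizationMonoid M] [UniqueFactorizationMonoid M] [DecidableEq M] {a b : M} {n : ℕ}
    (ha : a ≠ 0) (hdvd : ∀ f ∈ normalizedFactors a, f ∣ b)
    (hcount : ∀ f ∈ normalizedFactors a, (normalizedFactors a).count f ≤ n) :
    a ∣ b ^ n := by
  refine (prod_normalizedFactors ha).dvd_iff_dvd_left.mp ?_
  rw [Finset.prod_multiset_count, toFinset_normalizedFactors]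
  refine Finset.prod_dvd_of_isRelPrime
    (fun f hf g hg hfg ↦ (pairwise_primeFactors_isRelPrime hf hg hfg).pow) fun f hf ↦ ?_
  have hf' : f ∈ normalizedFactors a := mem_primeFactors.mp hf
  exact (pow_dvd_pow f (hcount f hf')).trans (pow_dvd_pow_of_dvd (hdvd f hf') n)

theorem periodic_of_succ_eq_smul_of_pow_eq_one {M V : Type*} [Monoid M] [MulAction M V] {a : M}
    {T : ℕ} (ha : a ^ T = 1) {v : ℕ → V} (hv : ∀ n, v (n + 1) = a • v n) :
    Function.Periodic v T := by
  have hpow (n t : ℕ) : v (n + t) = a ^ t • v n := by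
    induction t with
    | zero => rw [add_zero, pow_zero, one_smul]
    | succ t ih => rw [← add_assoc, hv, ih, smul_smul, pow_succ']
  intro n
  rw [hpow, ha, one_smul]

section FiniteField

variable {F : Type*} [Field F] [Finite F]

theorem irreducible_dvd_X_pow_succ_sub_X {f : F[X]} (hf : Irreducible f) {Q : ℕ}
    (hQ : Nat.card F ^ f.natDegree - 1 ∣ Q) : f ∣ X ^ (Q + 1) - X := by
  have hpos : 1 ≤ Nat.card F ^ f.natDegree := Nat.one_le_pow _ _ Nat.card_pos
  calc
    f ∣ X ^ Nat.card F ^ f.natDegree - X :=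
      hf.natDegree_dvd_iff_dvd_X_pow_card_pow_sub_X.mp dvd_rfl
    _ = X * (X ^ (Nat.card F ^ f.natDegree - 1) - 1) := by
      rw [mul_sub_one, ← pow_succ', Nat.sub_add_cancel hpos]
    _ ∣ X * (X ^ Q - 1) := mul_dvd_mul_left _ (dvd_pow_sub_one_of_dvd hQ)
    _ = X ^ (Q + 1) - X := by rw [mul_sub_one, ← pow_succ']

variable [DecidableEq F] {p m : ℕ} [CharP F p] {R : Type*} [Ring R] [Algebra F R] {a : R}
  {g : F[X]} {Q : ℕ}

theorem pow_succ_mul_eq_pow_of_aeval_eq_zero (hg : g ≠ 0) (hga : aeval a g = 0)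
    (hmult : ∀ f ∈ normalizedFactors g, (normalizedFactors g).count f ≤ p ^ m)
    (hQ : ∀ f ∈ normalizedFactors g, Nat.card F ^ f.natDegree - 1 ∣ Q) :
    a ^ ((Q + 1) * p ^ m) = a ^ p ^ m := by
  have : Fact p.Prime := ⟨CharP.char_is_prime F p⟩
  have hdvd : g ∣ X ^ ((Q + 1) * p ^ m) - X ^ p ^ m := by
    rw [pow_mul, ← sub_pow_char_pow]
    exact dvd_pow_of_count_normalizedFactors_le hg
      (fun f hf ↦ irreducible_dvd_X_pow_succ_sub_X (irreducible_of_normalized_factor f hf)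
        (hQ f hf)) hmult
  have haeval := aeval_eq_zero_of_dvd_aeval_eq_zero hdvd hga
  rwa [map_sub, map_pow, map_pow, aeval_X, sub_eq_zero] at haeval

end FiniteField

theorem stmt4_general {F : Type*} [Field F] [Fintype F] [DecidableEq F] {p m : ℕ} [CharP F p]
    {R : Type*} [Ring R] [Algebra F R] {V : Type*} [MulAction R V] {a : R} {g : F[X]} {Q : ℕ}
    (ha : IsUnit a) (hg : g ≠ 0) (hga : aeval a g = 0)
    (hmult : ∀ f ∈ normalizedFactors g, (normalizedFactors g).count f ≤ p ^ m)
    (hQ : ((normalizedFactors g).toFinset.image natDegree).lcm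
        (fun α ↦ Fintype.card F ^ α - 1) ∣ Q) :
    a ^ (Q * p ^ m) = 1 ∧
      ∀ v : ℕ → V, (∀ n, v (n + 1) = a • v n) → ∀ n, v (n + Q * p ^ m) = v n := by
  have hdeg (f) (hf : f ∈ normalizedFactors g) : Nat.card F ^ f.natDegree - 1 ∣ Q := by
    rw [Nat.card_eq_fintype_card]
    exact Finset.lcm_dvd_iff.mp hQ _ (Finset.mem_image_of_mem _ (Multiset.mem_toFinset.mpr hf))
  have hpow : a ^ (Q * p ^ m) = 1 := by
    refine (ha.pow (p ^ m)).mul_eq_right.mp ?_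
    rw [← pow_add, ← Nat.succ_mul]
    exact pow_succ_mul_eq_pow_of_aeval_eq_zero hg hga hmult hdeg
  exact ⟨hpow, fun _ ↦ periodic_of_succ_eq_smul_of_pow_eq_one hpow⟩

/-- Let `F = 𝔽_q` be a finite field with `q` elements of characteristic `p`, `A`
an invertible `k × k` matrix over `F`, and let `Q` be the least common multiple of the numbers
`q ^ α - 1` as `α` ranges over the degrees of the distinct irreducible factors of the
characteristic polynomial of `A`.  Assume each irreducible factor of the characteristic polynomial
occurs with multiplicity at most `p`.  Then `A ^ (Q * p) = 1`; equivalently, every solution of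
`v_{n+1} = A v_n` over `F` is `Q p`-periodic. -/
theorem stmt4 (F : Type*) [Field F] [Fintype F] (p : ℕ) [CharP F p] (k : ℕ) [DecidableEq F]
    (A : Matrix (Fin k) (Fin k) F) (hA : IsUnit A)
    (hmult : ∀ f ∈ (normalizedFactors (Matrix.charpoly A)).toFinset,
        (normalizedFactors (Matrix.charpoly A)).count f ≤ p)
    (Q : ℕ)
    (hQ : Q = ((normalizedFactors (Matrix.charpoly A)).toFinset.image
        Polynomial.natDegree).lcm (fun α => Fintype.card F ^ α - 1)) :
    A ^ (Q * p) = 1 ∧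
      ∀ v : ℕ → (Fin k → F), (∀ n, v (n + 1) = A.mulVec (v n)) →
        ∀ n, v (n + Q * p) = v n := by
  simp only [Multiset.mem_toFinset] at hmult
  simpa only [pow_one] using! stmt4_general (V := Fin k → F) (m := 1) hA A.charpoly_monic.ne_zero
    A.aeval_self_charpoly (by simpa only [pow_one] using hmult) hQ.symm.dvd
end

section
/- Let p be a prime and define the integer sequence (a_n) by a_k = k for k = 0, 1, …, p−1 and a_n = a_{n−1} + a_{n−p} for n ≥ p. Then a_{n+p²−1} ≡ a_n (mod p) for all n; that is, the sequence (a_n mod p) is periodic with period p² − 1. -/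
/-!
Over a ring of exponential characteristic `p`, with `q` a power of `p`, a solution of
`a_n = a_{n-1} + a_{n-q}` is annihilated by `f = X ^ q - X ^ (q - 1) - 1`, where `X` acts as the
shift, so it suffices that `f` divides `X ^ (q ^ 2 - 1) - 1`. Put `u = X ^ (q - 1)`. Then
`f = u * (X - 1) - 1`, and Frobenius gives `f ^ q = u ^ q * (X ^ q - 1) - 1`. Modulo `f` we have
`X ^ q - 1 = u`, so `u ^ (q + 1) = X ^ (q ^ 2 - 1)` is congruent to `1`.
-/

open Polynomial

theorem pow_sub_pow_sub_one_dvd_pow_sq_sub_one {R : Type*} [CommRing R] (p k : ℕ) [ExpChar R p]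
    (x : R) :
    x ^ p ^ k - x ^ (p ^ k - 1) - 1 ∣ x ^ ((p ^ k) ^ 2 - 1) - 1 := by
  have hq : 0 < p ^ k := pow_pos (expChar_pos R p) k
  have frobenius_sub_one (y : R) : (y - 1) ^ p ^ k = y ^ p ^ k - 1 := by
    rw [sub_pow_expChar_pow, one_pow]
  generalize p ^ k = q at hq frobenius_sub_one ⊢
  have pow_sq_sub_one : x ^ (q ^ 2 - 1) = (x ^ (q - 1)) ^ q * x ^ (q - 1) := by
    rw [← pow_succ, ← pow_mul, mul_comm, ← Nat.sq_sub_sq q 1, one_pow]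
  have factor : x ^ q - x ^ (q - 1) - 1 = x ^ (q - 1) * (x - 1) - 1 := by
    rw [mul_sub_one, pow_sub_one_mul hq.ne']
  have frobenius_factor :
      (x ^ q - x ^ (q - 1) - 1) ^ q = (x ^ (q - 1)) ^ q * (x ^ q - 1) - 1 := by
    rw [factor, frobenius_sub_one, mul_pow, frobenius_sub_one]
  have decomposition : x ^ (q ^ 2 - 1) - 1 =
      (x ^ q - x ^ (q - 1) - 1) ^ q - (x ^ q - x ^ (q - 1) - 1) * (x ^ (q - 1)) ^ q := by
    rw [frobenius_factor, pow_sq_sub_one]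
    ring
  rw [decomposition]
  exact dvd_sub (dvd_pow_self _ hq.ne') (dvd_mul_right _ _)

theorem aeval_apply_eq_zero_of_dvd {R M : Type*} [CommSemiring R] [AddCommMonoid M] [Module R M]
    {φ : Module.End R M} {f g : R[X]} {x : M} (hfg : f ∣ g) (hf : aeval φ f x = 0) :
    aeval φ g x = 0 := by
  obtain ⟨h, rfl⟩ := hfg
  rw [mul_comm, map_mul, Module.End.mul_apply, hf, map_zero]

/-- The left shift `a ↦ (n ↦ a (n + 1))` as an endomorphism of the module of `M`-valued sequences,
through which polynomials act on sequences. -/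
def seqShift (R M : Type*) [Semiring R] [AddCommMonoid M] [Module R M] : Module.End R (ℕ → M) :=
  LinearMap.funLeft R M Nat.succ

theorem seqShift_pow_apply {R M : Type*} [Semiring R] [AddCommMonoid M] [Module R M] (k : ℕ)
    (a : ℕ → M) (n : ℕ) : (seqShift R M ^ k) a n = a (n + k) := by
  induction k generalizing a with
  | zero => rfl
  | succ k ih =>
    rw [pow_succ, Module.End.mul_apply, ih]
    rfl

section CommRing

variable {R M : Type*} [CommRing R] [AddCommGroup M] [Module R M] {a : ℕ → M}

theorem aeval_seqShift_eq_zero_iff_recurrence {q : ℕ} (hq : 0 < q) :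
    aeval (seqShift R M) (X ^ q - X ^ (q - 1) - 1 : R[X]) a = 0 ↔
      ∀ n, q ≤ n → a n = a (n - 1) + a (n - q) := by
  have aeval_apply (n : ℕ) : aeval (seqShift R M) (X ^ q - X ^ (q - 1) - 1 : R[X]) a n =
      a (n + q) - a (n + q - 1) - a n := by
    simp [seqShift_pow_apply, Nat.add_sub_assoc hq]
  simp only [funext_iff, aeval_apply, Pi.zero_apply, sub_eq_zero (b := a _), sub_eq_iff_eq_add']
  refine ⟨fun h n hn => ?_, fun h n => ?_⟩
  · simpa only [Nat.sub_add_cancel hn] using h (n - q)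
  · simpa only [Nat.add_sub_cancel] using h (n + q) (Nat.le_add_left q n)

theorem aeval_seqShift_eq_zero_iff_periodic {T : ℕ} :
    aeval (seqShift R M) (X ^ T - 1 : R[X]) a = 0 ↔ Function.Periodic a T := by
  simp [funext_iff, Function.Periodic, seqShift_pow_apply, sub_eq_zero]

end CommRing

theorem stmt9_general (R : Type*) {M : Type*} [CommRing R] [AddCommGroup M] [Module R M]
    (p k : ℕ) [ExpChar R p] (a : ℕ → M)
    (hrec : ∀ n, p ^ k ≤ n → a n = a (n - 1) + a (n - p ^ k)) :
    Function.Periodic a ((p ^ k) ^ 2 - 1) := by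
  have hq : 0 < p ^ k := pow_pos (expChar_pos R p) k
  rw [← aeval_seqShift_eq_zero_iff_periodic (R := R)]
  exact aeval_apply_eq_zero_of_dvd (pow_sub_pow_sub_one_dvd_pow_sq_sub_one p k X)
    ((aeval_seqShift_eq_zero_iff_recurrence hq).2 hrec)

/-- Let `p` be a prime and let `(a_n)` be the integer sequence with `a_k = k`
for `0 ≤ k ≤ p - 1` and `a_n = a_{n-1} + a_{n-p}` for `n ≥ p`.  Then
`a_{n + p² - 1} ≡ a_n (mod p)` for all `n`; i.e. `(a_n mod p)` is `(p² - 1)`-periodic. -/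
theorem stmt9 (p : ℕ) (hp : p.Prime) (a : ℕ → ℤ)
    (h0 : ∀ k < p, a k = k)
    (hrec : ∀ n, p ≤ n → a n = a (n - 1) + a (n - p)) :
    ∀ n : ℕ, a (n + (p ^ 2 - 1)) ≡ a n [ZMOD p] := by
  have : Fact p.Prime := ⟨hp⟩
  have periodic_mod : Function.Periodic (fun n => (a n : ZMod p)) (p ^ 2 - 1) := by
    simpa only [pow_one] using stmt9_general (ZMod p) p 1 (fun n => (a n : ZMod p))
      fun n hn => by simp [hrec n (by simpa using hn)]
  exact fun n => (ZMod.intCast_eq_intCast_iff _ _ p).1 (periodic_mod n)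
end

section
/- Let p be a prime and define the integer sequence (a_n) by a_k = k for k = 0, 1, …, p−1 and a_n = a_{n−1} + a_{n−p} for n ≥ p. Then the sequence (a_n), viewed in the field ℚ_p of p-adic numbers, does not converge. -/
open Filter

/-!
Passing to the limit in the recurrence gives `L = L + L`, so the only possible limit is `0`. The
recurrence can also be solved for its oldest term, `a n = -a (n + d - 1) + a (n + d)`, so a subgroup
that contains a tail of the sequence contains all of it. In a nonarchimedean group the open
subgroups form a basis of neighbourhoods of `0`; hence a convergent solution has all its terms in
every open subgroup, and it is zero.
-/

section LaggedRecurrence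

variable {G : Type*} [AddGroup G] {d : ℕ} {a : ℕ → G}

theorem mem_of_eventually_mem_of_recurrence (hd : 1 < d)
    (hrec : ∀ n, d ≤ n → a n = a (n - 1) + a (n - d)) {H : AddSubgroup G}
    (hH : ∀ᶠ n in atTop, a n ∈ H) (n : ℕ) : a n ∈ H := by
  obtain ⟨N, hN⟩ := eventually_atTop.1 hH
  suffices hdesc : ∀ k m, N ≤ m + k → a m ∈ H from hdesc N n (Nat.le_add_left N n)
  intro k
  induction k with
  | zero => exact hN
  | succ k ih =>
    intro m hm
    have hstep : a (m + d) = a (m + d - 1) + a m := by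
      simpa only [Nat.add_sub_cancel] using hrec (m + d) (Nat.le_add_left d m)
    have hsum : a (m + d - 1) + a m ∈ H := hstep ▸ ih (m + d) (by omega)
    exact (H.add_mem_cancel_left (ih (m + d - 1) (by omega))).1 hsum

variable [TopologicalSpace G]

theorem eq_zero_of_tendsto_of_recurrence [ContinuousAdd G] [T2Space G]
    (hrec : ∀ n, d ≤ n → a n = a (n - 1) + a (n - d)) {L : G}
    (hL : Tendsto a atTop (nhds L)) : L = 0 := by
  have hsum : Tendsto (fun n => a (n - 1) + a (n - d)) atTop (nhds (L + L)) :=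
    (hL.comp (tendsto_sub_atTop_nat 1)).add (hL.comp (tendsto_sub_atTop_nat d))
  have hrec' : a =ᶠ[atTop] fun n => a (n - 1) + a (n - d) :=
    eventually_atTop.2 ⟨d, hrec⟩
  exact left_eq_add.1 (tendsto_nhds_unique hL (hsum.congr' hrec'.symm))

theorem eq_zero_of_forall_mem_openAddSubgroup [NonarchimedeanAddGroup G] [T1Space G] {x : G}
    (hx : ∀ V : OpenAddSubgroup G, x ∈ V) : x = 0 := by
  by_contra hne
  obtain ⟨V, hV⟩ :=
    NonarchimedeanAddGroup.is_nonarchimedean _ (compl_singleton_mem_nhds (Ne.symm hne))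
  exact hV (hx V) rfl

theorem stmt10_general [NonarchimedeanAddGroup G] [T2Space G] (hd : 1 < d)
    (hrec : ∀ n, d ≤ n → a n = a (n - 1) + a (n - d)) (ha : a ≠ 0) :
    ¬ ∃ L : G, Tendsto a atTop (nhds L) := by
  rintro ⟨L, hL⟩
  obtain rfl : L = 0 := eq_zero_of_tendsto_of_recurrence hrec hL
  have hmem (n : ℕ) (V : OpenAddSubgroup G) : a n ∈ V :=
    mem_of_eventually_mem_of_recurrence hd hrec (hL.eventually_mem V.mem_nhds_zero) n
  exact ha (funext fun n => eq_zero_of_forall_mem_openAddSubgroup (hmem n))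

end LaggedRecurrence

/-- Let `p` be a prime and let `(a_n)` be the integer sequence with `a_k = k`
for `0 ≤ k ≤ p - 1` and `a_n = a_{n-1} + a_{n-p}` for `n ≥ p`.  Then the sequence `(a_n)`, viewed
in `ℚ_[p]`, does not converge. -/
theorem stmt10 (p : ℕ) [Fact p.Prime] (a : ℕ → ℤ)
    (h0 : ∀ k < p, a k = k)
    (hrec : ∀ n, p ≤ n → a n = a (n - 1) + a (n - p)) :
    ¬ ∃ L : ℚ_[p], Tendsto (fun n : ℕ => ((a n : ℤ) : ℚ_[p])) atTop (nhds L) := by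
  have hp : p.Prime := Fact.out
  refine stmt10_general hp.one_lt (fun n hn => by exact_mod_cast hrec n hn) fun ha => ?_
  simpa [h0 1 hp.one_lt] using congrFun ha 1
end
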